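/- The polynomial p(x) = x⁸ − 3x⁷ + 5x⁶ − 3x⁵ + 2x⁴ + 2x³ + 2x + 1 is irreducible over ℚ; the number field K = ℚ[x]/(p(x)) has discriminant 156166337, which is a prime number; and the ring of integers of K equals ℤ[t], where t denotes the image of x in K. -/

import Mathlib

open Polynomial

/-- The polynomial `p(x) = x⁸ − 3x⁷ + 5x⁶ − 3x⁵ + 2x⁴ + 2x³ + 2x + 1` over `ℚ`. -/
noncomputable def pK : ℚ[X] :=
  X ^ 8 - 3 * X ^ 7 + 5 * X ^ 6 - 3 * X ^ 5 + 2 * X ^ 4 + 2 * X ^ 3 + 2 * X + 1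

/-- The integral model of `pK`. -/
noncomputable def pZ : ℤ[X] :=
  X ^ 8 - 3 * X ^ 7 + 5 * X ^ 6 - 3 * X ^ 5 + 2 * X ^ 4 + 2 * X ^ 3 + 2 * X + 1

lemma pZ_natDegree : pZ.natDegree = 8 := by
  unfold pZ; compute_degree!

lemma pZ_monic : pZ.Monic := by
  unfold pZ; monicity!

lemma pZ_map : pZ.map (algebraMap ℤ ℚ) = pK := by
  simp [pZ, pK]

/-- The reduction of `pZ` modulo 3. -/
noncomputable def p3 : (ZMod 3)[X] := pZ.map (Int.castRingHom (ZMod 3))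

lemma p3_natDegree : p3.natDegree = 8 := by
  rw [p3, pZ_monic.natDegree_map, pZ_natDegree]

lemma p3_monic : p3.Monic := pZ_monic.map _

lemma p3_coeff : p3.coeff 0 = 1 ∧ p3.coeff 1 = 2 ∧ p3.coeff 2 = 0 ∧ p3.coeff 3 = 2 ∧
    p3.coeff 4 = 2 ∧ p3.coeff 5 = 0 ∧ p3.coeff 6 = 2 ∧ p3.coeff 7 = 0 := by
  have h : p3 = C 1 * X ^ 8 - C 3 * X ^ 7 + C 5 * X ^ 6 - C 3 * X ^ 5 + C 2 * X ^ 4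
      + C 2 * X ^ 3 + C 2 * X ^ 1 + C 1 := by
    have e3 : (C 3 : (ZMod 3)[X]) = 3 := rfl
    have e5 : (C 5 : (ZMod 3)[X]) = 5 := rfl
    have e2 : (C 2 : (ZMod 3)[X]) = 2 := rfl
    rw [e3, e5, e2]
    simp [p3, pZ]
  rw [h]
  simp only [coeff_add, coeff_sub, coeff_C_mul_X_pow, coeff_C]
  decide

set_option maxRecDepth 100000 in
set_option synthInstance.maxHeartbeats 400000 in
set_option synthInstance.maxSize 4000 in
lemma no1 : ∀ b6 a0 : ZMod 3, a0 + b6 = 0 → ∀ b5, b5 + a0 * b6 = 2 → ∀ b4, b4 + a0 * b5 = 0 →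
    ∀ b3, b3 + a0 * b4 = 2 → ∀ b2, b2 + a0 * b3 = 2 → ∀ b1, b1 + a0 * b2 = 0 →
    ∀ b0, b0 + a0 * b1 = 2 → a0 * b0 = 1 → False := by decide

set_option maxRecDepth 100000 in
set_option synthInstance.maxHeartbeats 400000 in
set_option synthInstance.maxSize 4000 in
lemma no2 : ∀ b5 a1 : ZMod 3, a1 + b5 = 0 → ∀ b4 a0, b4 + a1 * b5 + a0 = 2 →
    ∀ b3, b3 + a1 * b4 + a0 * b5 = 0 → ∀ b2, b2 + a1 * b3 + a0 * b4 = 2 →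
    ∀ b1, b1 + a1 * b2 + a0 * b3 = 2 → ∀ b0, b0 + a1 * b1 + a0 * b2 = 0 →
    a1 * b0 + a0 * b1 = 2 → a0 * b0 = 1 → False := by decide

set_option maxRecDepth 100000 in
set_option synthInstance.maxHeartbeats 400000 in
set_option synthInstance.maxSize 4000 in
lemma no3 : ∀ b4 a2 : ZMod 3, a2 + b4 = 0 → ∀ b3 a1, b3 + a2 * b4 + a1 = 2 →
    ∀ b2 a0, b2 + a2 * b3 + a1 * b4 + a0 = 0 → ∀ b1, b1 + a2 * b2 + a1 * b3 + a0 * b4 = 2 →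
    ∀ b0, b0 + a2 * b1 + a1 * b2 + a0 * b3 = 2 → a2 * b0 + a1 * b1 + a0 * b2 = 0 →
    a1 * b0 + a0 * b1 = 2 → a0 * b0 = 1 → False := by decide

set_option maxRecDepth 100000 in
set_option synthInstance.maxHeartbeats 400000 in
set_option synthInstance.maxSize 4000 in
lemma no4 : ∀ b3 a3 : ZMod 3, a3 + b3 = 0 → ∀ b2 a2, b2 + a3 * b3 + a2 = 2 →
    ∀ b1 a1, b1 + a3 * b2 + a2 * b3 + a1 = 0 →
    ∀ b0 a0, b0 + a3 * b1 + a2 * b2 + a1 * b3 + a0 = 2 →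
    a3 * b0 + a2 * b1 + a1 * b2 + a0 * b3 = 2 → a2 * b0 + a1 * b1 + a0 * b2 = 0 →
    a1 * b0 + a0 * b1 = 2 → a0 * b0 = 1 → False := by
  decide

lemma p3_irreducible : Irreducible p3 := by
  have hne : p3 ≠ 1 := fun h => by
    have := p3_natDegree
    rw [h] at this
    simp at this
  refine (p3_monic.irreducible_iff_natDegree').2 ⟨hne, ?_⟩
  intro f g hf hg hfg hd
  have hdeg : f.natDegree + g.natDegree = 8 := by
    rw [← hf.natDegree_mul hg, hfg, p3_natDegree]
  rw [p3_natDegree, Finset.mem_Ioc] at hd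
  obtain ⟨c0, c1, c2, c3, c4, c5, c6, c7⟩ := p3_coeff
  rw [← hfg] at c0 c1 c2 c3 c4 c5 c6 c7
  have hf0 : ∀ n, f.natDegree < n → f.coeff n = 0 := fun n h => coeff_eq_zero_of_natDegree_lt h
  have hg0 : ∀ n, g.natDegree < n → g.coeff n = 0 := fun n h => coeff_eq_zero_of_natDegree_lt h
  have hf1 : f.coeff f.natDegree = 1 := hf
  have hg1 : g.coeff g.natDegree = 1 := hg
  simp only [coeff_mul, Finset.Nat.antidiagonal_succ, Finset.Nat.antidiagonal_zero,
    Finset.sum_cons, Finset.map_cons, Finset.map_singleton,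
    Function.Embedding.prodMap, Function.Embedding.coeFn_mk, Prod.map,
    Function.Embedding.refl_apply, Finset.sum_singleton, Nat.succ_eq_add_one] at c0 c1 c2 c3 c4 c5 c6 c7
  norm_num at c0 c1 c2 c3 c4 c5 c6 c7
  obtain ⟨hd1, hd2⟩ := hd
  obtain h | h | h | h : g.natDegree = 1 ∨ g.natDegree = 2 ∨ g.natDegree = 3 ∨ g.natDegree = 4 := by
    omega
  · have h' : f.natDegree = 7 := by omega
    rw [h] at hg0 hg1
    rw [h'] at hf0 hf1
    simp only [hg1, hf1, hg0 2 (by norm_num), hg0 3 (by norm_num), hg0 4 (by norm_num),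
      hg0 5 (by norm_num), hg0 6 (by norm_num), hg0 7 (by norm_num)] at c0 c1 c2 c3 c4 c5 c6 c7
    refine no1 (f.coeff 6) (g.coeff 0) ?_ (f.coeff 5) ?_ (f.coeff 4) ?_ (f.coeff 3) ?_
      (f.coeff 2) ?_ (f.coeff 1) ?_ (f.coeff 0) ?_ ?_
    · linear_combination c7
    · linear_combination c6
    · linear_combination c5
    · linear_combination c4
    · linear_combination c3
    · linear_combination c2
    · linear_combination c1
    · linear_combination c0
  · have h' : f.natDegree = 6 := by omega
    rw [h] at hg0 hg1
    rw [h'] at hf0 hf1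
    simp only [hg1, hf1, hf0 7 (by norm_num), hg0 3 (by norm_num), hg0 4 (by norm_num),
      hg0 5 (by norm_num), hg0 6 (by norm_num), hg0 7 (by norm_num)] at c0 c1 c2 c3 c4 c5 c6 c7
    refine no2 (f.coeff 5) (g.coeff 1) ?_ (f.coeff 4) (g.coeff 0) ?_ (f.coeff 3) ?_
      (f.coeff 2) ?_ (f.coeff 1) ?_ (f.coeff 0) ?_ ?_ ?_
    · linear_combination c7
    · linear_combination c6
    · linear_combination c5
    · linear_combination c4
    · linear_combination c3
    · linear_combination c2
    · linear_combination c1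
    · linear_combination c0
  · have h' : f.natDegree = 5 := by omega
    rw [h] at hg0 hg1
    rw [h'] at hf0 hf1
    simp only [hg1, hf1, hf0 7 (by norm_num), hf0 6 (by norm_num), hg0 4 (by norm_num),
      hg0 5 (by norm_num), hg0 6 (by norm_num), hg0 7 (by norm_num)] at c0 c1 c2 c3 c4 c5 c6 c7
    refine no3 (f.coeff 4) (g.coeff 2) ?_ (f.coeff 3) (g.coeff 1) ?_ (f.coeff 2) (g.coeff 0) ?_
      (f.coeff 1) ?_ (f.coeff 0) ?_ ?_ ?_ ?_
    · linear_combination c7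
    · linear_combination c6
    · linear_combination c5
    · linear_combination c4
    · linear_combination c3
    · linear_combination c2
    · linear_combination c1
    · linear_combination c0
  · have h' : f.natDegree = 4 := by omega
    rw [h] at hg0 hg1
    rw [h'] at hf0 hf1
    simp only [hg1, hf1, hf0 7 (by norm_num), hf0 6 (by norm_num), hf0 5 (by norm_num),
      hg0 5 (by norm_num), hg0 6 (by norm_num), hg0 7 (by norm_num)] at c0 c1 c2 c3 c4 c5 c6 c7
    refine no4 (f.coeff 3) (g.coeff 3) ?_ (f.coeff 2) (g.coeff 2) ?_ (f.coeff 1) (g.coeff 1) ?_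
      (f.coeff 0) (g.coeff 0) ?_ ?_ ?_ ?_ ?_
    · linear_combination c7
    · linear_combination c6
    · linear_combination c5
    · linear_combination c4
    · linear_combination c3
    · linear_combination c2
    · linear_combination c1
    · linear_combination c0

lemma pZ_irreducible : Irreducible pZ :=
  pZ_monic.irreducible_of_irreducible_map (Int.castRingHom (ZMod 3)) _ p3_irreducible

lemma pK_irreducible : Irreducible pK := by
  rw [← pZ_map]
  exact (pZ_monic.irreducible_iff_irreducible_map_fraction_map).1 pZ_irreducible

lemma pK_monic : pK.Monic := by
  rw [← pZ_map]; exact pZ_monic.map _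

lemma pK_natDegree : pK.natDegree = 8 := by
  rw [← pZ_map, pZ_monic.natDegree_map, pZ_natDegree]

def matN : Matrix (Fin 8) (Fin 8) ℤ := !![2, -8, -3, 1, 9, 21, 37, 37;
  0, -14, -14, -1, 19, 51, 95, 111;
  6, 0, -14, -14, -1, 19, 51, 95;
  8, -10, -6, -12, 4, 41, 93, 125;
  -15, -8, -16, -4, 6, 46, 115, 167;
  30, 9, 1, -19, -31, -57, -65, 4;
  -21, -10, -6, 6, 26, 74, 128, 120;
  8, 3, -1, -9, -21, -37, -37, 17]

def matA : Matrix (Fin 8) (Fin 8) ℤ := !![1, 0, 0, 0, 0, 0, 0, 0;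
  0, 1, 0, 0, 0, 0, 0, 0;
  -21, 12, 7, 0, 0, 0, 0, 0;
  -476, 127, -112, 203, 0, 0, 0, 0;
  23254, -11872, 5385, -4336, 2942, 0, 0, 0;
  -913428, 475622, -270872, 153561, -62804, 42718, 0, 0;
  4323184, -2023752, 896938, -1205548, 330429, 649274, 900257, 0;
  -79649820, 45415856, -20319480, 8983622, -14194436, 2533563, 8497390, 12358663]

def matU : Matrix (Fin 8) (Fin 8) ℤ := !![2, -8, -3, 1, 9, 21, 37, 37;
  0, -14, -14, -1, 19, 51, 95, 111;
  0, 0, -203, -131, 32, 304, 720, 1220;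
  0, 0, 0, -1471, -947, 2676, 7620, 11220;
  0, 0, 0, 0, -21359, -57267, -57725, 3495;
  0, 0, 0, 0, 0, 900257, 1854825, 2142095;
  0, 0, 0, 0, 0, 0, 12358663, 35646525;
  0, 0, 0, 0, 0, 0, 0, 156166337]

set_option maxRecDepth 100000 in
set_option synthInstance.maxHeartbeats 400000 in
set_option synthInstance.maxSize 4000 in
lemma matA_mul : matA * matN = matU := by
  decide

set_option maxRecDepth 100000 in
set_option synthInstance.maxHeartbeats 400000 in
set_option synthInstance.maxSize 4000 in
lemma matN_det : matN.det = 156166337 := by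
  have h := congrArg Matrix.det matA_mul
  have hA : matA.BlockTriangular OrderDual.toDual := by
    have : ∀ i j : Fin 8, (matA i j).natAbs = 0 ∨ ¬ i < j := by decide
    intro i j hij
    exact Int.natAbs_eq_zero.1 ((this i j).resolve_right (not_not_intro hij))
  have hU : matU.BlockTriangular id := by
    have : ∀ i j : Fin 8, (matU i j).natAbs = 0 ∨ ¬ j < i := by decide
    intro i j hij
    exact Int.natAbs_eq_zero.1 ((this i j).resolve_right (not_not_intro hij))
  rw [Matrix.det_mul, Matrix.det_of_isLowerTriangular _ hA, Matrix.det_of_isUpperTriangular hU] at h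
  have h1 : ∏ i, matA i i = 7 * 203 * 2942 * 42718 * 900257 * 12358663 := by decide
  have h2 : ∏ i, matU i i = 7 * 203 * 2942 * 42718 * 900257 * 12358663 * 156166337 := by decide
  rw [h1, h2] at h
  exact mul_left_cancel₀ (by norm_num) h

lemma norm_deriv {K : Type} [Field K] [NumberField K] (t : K) (ht : aeval t pK = 0)
    (b : Module.Basis (Fin 8) ℚ K) (hb : ∀ i, b i = t ^ (i : ℕ)) :
    Algebra.norm ℚ (aeval t (derivative pK)) = 156166337 := by
  have e2 : aeval t (2 : ℚ[X]) = 2 := map_ofNat _ 2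
  have e3 : aeval t (3 : ℚ[X]) = 3 := map_ofNat _ 3
  have e5 : aeval t (5 : ℚ[X]) = 5 := map_ofNat _ 5
  have hp : t ^ 8 - 3 * t ^ 7 + 5 * t ^ 6 - 3 * t ^ 5 + 2 * t ^ 4 + 2 * t ^ 3 + 2 * t + 1 = 0 := by
    simpa [pK, e2, e3, e5] using ht
  have hd : aeval t (derivative pK) = 8 * t ^ 7 - 21 * t ^ 6 + 30 * t ^ 5 - 15 * t ^ 4 + 8 * t ^ 3
      + 6 * t ^ 2 + 2 := by
    simp [pK, e2, e3, e5]
    ring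
  rw [Algebra.norm_eq_matrix_det b]
  have : Algebra.leftMulMatrix b (aeval t (derivative pK)) = matN.map (Int.castRingHom ℚ) := by
    have key : ∀ j, aeval t (derivative pK) * b j = ∑ i, (matN i j : ℚ) • b i := by
      intro j
      rw [hd]
      simp only [hb, Algebra.smul_def, map_intCast]
      fin_cases j
      · simp [Fin.sum_univ_succ, matN]; ring
      · simp [Fin.sum_univ_succ, matN]; linear_combination 8 * hp
      · simp [Fin.sum_univ_succ, matN]; linear_combination (3 + 8 * t) * hp
      · simp [Fin.sum_univ_succ, matN]; linear_combination (-1 + 3 * t + 8 * t ^ 2) * hp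
      · simp [Fin.sum_univ_succ, matN]
        linear_combination (-9 - t + 3 * t ^ 2 + 8 * t ^ 3) * hp
      · simp [Fin.sum_univ_succ, matN]
        linear_combination (-21 - 9 * t - t ^ 2 + 3 * t ^ 3 + 8 * t ^ 4) * hp
      · simp [Fin.sum_univ_succ, matN]
        linear_combination (-37 - 21 * t - 9 * t ^ 2 - t ^ 3 + 3 * t ^ 4 + 8 * t ^ 5) * hp
      · simp [Fin.sum_univ_succ, matN]
        linear_combination
          (-37 - 37 * t - 21 * t ^ 2 - 9 * t ^ 3 - t ^ 4 + 3 * t ^ 5 + 8 * t ^ 6) * hp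
    ext i j
    rw [Algebra.leftMulMatrix_eq_repr_mul, key, Module.Basis.repr_sum_self]
    simp
  rw [this, ← RingHom.mapMatrix_apply, ← RingHom.map_det, matN_det]
  simp

open NumberField Matrix in
lemma main_part (K : Type) [Field K] [NumberField K] (t : 𝓞 K)
    (ht : aeval (algebraMap (𝓞 K) K t) pK = 0)
    (hadj : Algebra.adjoin ℚ {algebraMap (𝓞 K) K t} = ⊤) (hprime : Nat.Prime 156166337) :
    NumberField.discr K = 156166337 ∧ Algebra.adjoin ℤ ({t} : Set (𝓞 K)) = ⊤ := by
  classical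
  set s : K := algebraMap (𝓞 K) K t with hs
  have hmin : minpoly ℚ s = pK :=
    (minpoly.eq_of_irreducible_of_monic pK_irreducible ht pK_monic).symm
  let pb : PowerBasis ℚ K := PowerBasis.ofAdjoinEqTop (Algebra.IsIntegral.isIntegral s) hadj
  have hgen : pb.gen = s := PowerBasis.ofAdjoinEqTop_gen _ _
  have hdim : pb.dim = 8 := by
    rw [← pb.natDegree_minpoly, hgen, hmin, pK_natDegree]
  let b : Module.Basis (Fin 8) ℚ K := pb.basis.reindex (finCongr hdim)
  have hb : ∀ i, b i = s ^ (i : ℕ) := by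
    intro i
    simp [b, hgen]
  have hdisc0 : Algebra.discr ℚ pb.basis = 156166337 := by
    rw [Algebra.discr_powerBasis_eq_norm, PowerBasis.finrank pb, hdim, hgen,
      hmin, norm_deriv s ht b hb]
    norm_num
  let e : Fin pb.dim ≃ Module.Free.ChooseBasisIndex ℤ (𝓞 K) :=
    pb.basis.indexEquiv (integralBasis K)
  let B := RingOfIntegers.basis K
  let v : Module.Free.ChooseBasisIndex ℤ (𝓞 K) → 𝓞 K := fun i => t ^ (e.symm i : ℕ)
  let P := B.toMatrix v
  have hP : pb.basis.reindex e = integralBasis K ᵥ* ((P.map (algebraMap ℤ ℚ)).map (algebraMap ℚ K)) := by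
    have : P.map (algebraMap ℤ ℚ) = (integralBasis K).toMatrix (pb.basis.reindex e) := by
      ext i j
      have : pb.basis.reindex e j = algebraMap (𝓞 K) K (v j) := by
        simp [v, hgen, hs]
      rw [Module.Basis.toMatrix_apply, this, integralBasis_repr_apply]
      rfl
    rw [this, Module.Basis.toMatrix_map_vecMul]
  have hdet : (156166337 : ℤ) = P.det ^ 2 * NumberField.discr K := by
    have h1 := Algebra.discr_of_matrix_vecMul (integralBasis K) (P.map (algebraMap ℤ ℚ))
    rw [← hP, Module.Basis.coe_reindex, Algebra.discr_reindex, hdisc0, ← coe_discr,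
      ← RingHom.mapMatrix_apply, ← RingHom.map_det] at h1
    have h2 : ((156166337 : ℤ) : ℚ) = ((P.det ^ 2 * NumberField.discr K : ℤ) : ℚ) := by
      rw [Int.cast_mul, Int.cast_pow]
      simp only [eq_intCast] at h1
      rw [← h1]
      norm_num
    exact Int.cast_injective h2
  have hunit : IsUnit P.det := by
    have hpr : Prime (156166337 : ℤ) := by
      rw [← Nat.cast_ofNat, ← Nat.prime_iff_prime_int]; exact hprime
    exact hpr.irreducible.squarefree P.det ⟨NumberField.discr K, by rw [hdet]; ring⟩
  constructor
  · have : P.det ^ 2 = 1 := by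
      rcases Int.isUnit_iff.1 hunit with h | h <;> rw [h] <;> norm_num
    rw [this, one_mul] at hdet
    exact hdet.symm
  · have hspan := ((Module.Basis.is_basis_iff_det B (v := v)).2 (by
      rw [Module.Basis.det_apply]; exact hunit)).2
    rw [← Algebra.toSubmodule_eq_top, eq_top_iff, ← hspan, Submodule.span_le]
    rintro _ ⟨i, rfl⟩
    exact Subalgebra.pow_mem _ (Algebra.self_mem_adjoin_singleton ℤ t) _

/-- The polynomial `p(x)` is irreducible over `ℚ`; the number field
`K = ℚ[x]/(p(x))` (i.e. any number field generated over `ℚ` by a root `t` of `p`)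
has discriminant `156166337`, which is prime; and the ring of integers of `K`
equals `ℤ[t]`. -/
theorem stmt_11 :
    Irreducible pK ∧ Nat.Prime 156166337 ∧
    ∀ (K : Type) [Field K] [NumberField K] (t : NumberField.RingOfIntegers K),
      aeval (algebraMap (NumberField.RingOfIntegers K) K t) pK = 0 →
      Algebra.adjoin ℚ {algebraMap (NumberField.RingOfIntegers K) K t} = ⊤ →
      (NumberField.discr K = 156166337 ∧
        Algebra.adjoin ℤ ({t} : Set (NumberField.RingOfIntegers K)) = ⊤) := by
  have hprime : Nat.Prime 156166337 := by norm_num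
  exact ⟨pK_irreducible, hprime, fun K _ _ t ht hadj => main_part K t ht hadj hprime⟩
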